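/- arXiv:math-ph/0408053 — 10 statements merged into one kernel-verified Lean document; each statement's English description precedes it below -/
import Mathlib

section
/- The bilinear bracket defined on the basis elements Z_{n,m} by formula (e1) is antisymmetric and satisfies the Jacobi identity; hence it makes the vector space L_L into a complex Lie algebra. -/
/- The ladder insertion-elimination Lie algebra `L_L` of Mencattini–Kreimer,
realized as the complex vector space of finitely supported functions `ℕ × ℕ → ℂ`,
with basis elements `Z n m = single (n, m) 1` and the bilinear bracket determined
on basis elements by formula (e1). -/

noncomputable section

/-- The underlying vector space of the ladder insertion-elimination Lie algebra. -/
abbrev LL : Type := (ℕ × ℕ) →₀ ℂ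

/-- The basis element `Z_{n,m}`. -/
def Z (n m : ℕ) : LL := Finsupp.single (n, m) 1

/-- `Θ(k) = 1` if `k ≥ 0`, and `0` otherwise. -/
def theta (k : ℤ) : ℂ := if 0 ≤ k then 1 else 0

/-- The Kronecker delta `δ_{n,m}`. -/
def kdelta (n m : ℕ) : ℂ := if n = m then 1 else 0

/-- Formula (e1) for the bracket `[Z_{n,m}, Z_{l,s}]` on basis elements, where
`p = (n, m)` and `q = (l, s)`.  (The natural subtractions occurring in the indices
are truncated, but every such term is multiplied by a `theta` coefficient which
vanishes whenever truncation would occur.) -/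
def zb (p q : ℕ × ℕ) : LL :=
  theta ((q.1 : ℤ) - p.2) • Z (q.1 - p.2 + p.1) q.2
    - theta ((q.2 : ℤ) - p.1) • Z q.1 (q.2 - p.1 + p.2)
    - theta ((p.1 : ℤ) - q.2) • Z (p.1 - q.2 + q.1) p.2
    + theta ((p.2 : ℤ) - q.1) • Z p.1 (p.2 - q.1 + q.2)
    - kdelta p.2 q.1 • Z p.1 q.2 + kdelta p.1 q.2 • Z q.1 p.2

/-- The bilinear extension of formula (e1) to all of `L_L`. -/
def br (x y : LL) : LL :=
  x.sum fun p a => y.sum fun q b => (a * b) • zb p q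

end

/-- The bicyclic semigroup operation. -/
def opB (p q : ℕ × ℕ) : ℕ × ℕ := (p.1 + (q.1 - p.2), q.2 + (p.2 - q.1))

theorem opB_assoc (p q r : ℕ × ℕ) : opB (opB p q) r = opB p (opB q r) := by
  unfold opB
  ext <;> simp only <;> omega

/-- The associative product of the bicyclic semigroup algebra. -/
noncomputable def PB : LL →ₗ[ℂ] LL →ₗ[ℂ] LL :=
  Finsupp.linearCombination ℂ
    (fun p => Finsupp.linearCombination ℂ (fun q => (Finsupp.single (opB p q) 1 : LL)))

theorem PB_single (p q : ℕ × ℕ) (a b : ℂ) :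
    PB (Finsupp.single p a) (Finsupp.single q b) = Finsupp.single (opB p q) (a * b) := by
  simp only [PB, Finsupp.linearCombination_single, LinearMap.smul_apply, Finsupp.smul_single,
    smul_eq_mul, mul_one]

theorem half_eq (n m l s : ℕ) :
    theta ((l : ℤ) - m) • Z (l - m + n) s + theta ((m : ℤ) - l) • Z n (m - l + s)
      - kdelta m l • Z n s = (Finsupp.single (opB (n, m) (l, s)) 1 : LL) := by
  unfold theta kdelta Z opB
  rcases lt_trichotomy m l with h | h | h
  · have h1 : (0 : ℤ) ≤ l - m := by omega
    have h2 : ¬ (0 : ℤ) ≤ m - l := by omega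
    have h3 : m - l = 0 := by omega
    rw [if_pos h1, if_neg h2, if_neg h.ne, h3]
    simp [add_comm]
  · subst h
    simp
  · have h1 : ¬ (0 : ℤ) ≤ l - m := by omega
    have h2 : (0 : ℤ) ≤ m - l := by omega
    have h3 : l - m = 0 := by omega
    rw [if_neg h1, if_pos h2, if_neg h.ne', h3]
    simp [add_comm]

theorem zb_eq (p q : ℕ × ℕ) :
    zb p q = Finsupp.single (opB p q) 1 - Finsupp.single (opB q p) 1 := by
  obtain ⟨n, m⟩ := p
  obtain ⟨l, s⟩ := q
  rw [← half_eq n m l s, ← half_eq l s n m]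
  have hk : kdelta s n = kdelta n s := by unfold kdelta; simp only [eq_comm]
  rw [hk]
  unfold zb
  simp only
  abel

theorem br_eq (x y : LL) : br x y = PB x y - PB y x := by
  have h : br x y = Finsupp.linearCombination ℂ
      (fun p => Finsupp.linearCombination ℂ (zb p)) x y := by
    simp only [br, Finsupp.linearCombination_apply, Finsupp.sum, LinearMap.sum_apply,
      LinearMap.smul_apply, Finset.smul_sum, mul_smul]
  rw [h]
  clear h
  induction x using Finsupp.induction_linear with
  | zero => simp
  | add f g hf hg => simp only [map_add, LinearMap.add_apply, hf, hg]; abel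
  | single p a =>
    induction y using Finsupp.induction_linear with
    | zero => simp
    | add f g hf hg => simp only [map_add, LinearMap.add_apply, hf, hg]; abel
    | single q b =>
      simp only [PB_single, Finsupp.linearCombination_single, LinearMap.smul_apply, zb_eq,
        smul_sub, Finsupp.smul_single, smul_eq_mul, mul_one, mul_comm b a]

theorem PB_assoc (x y z : LL) : PB (PB x y) z = PB x (PB y z) := by
  induction x using Finsupp.induction_linear with
  | zero => simp
  | add f g hf hg => simp [hf, hg]
  | single p a =>
    induction y using Finsupp.induction_linear with
    | zero => simp
    | add f g hf hg => simp [hf, hg]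
    | single q b =>
      induction z using Finsupp.induction_linear with
      | zero => simp
      | add f g hf hg => simp [hf, hg]
      | single r c => simp only [PB_single, opB_assoc, mul_assoc]

/-- The bilinear bracket defined on basis elements by (e1) is
bilinear, antisymmetric and satisfies the Jacobi identity; hence it makes `L_L`
into a complex Lie algebra. -/
theorem bracket_is_lie_bracket :
    (∀ x y z : LL, br (x + y) z = br x z + br y z) ∧
    (∀ (c : ℂ) (x y : LL), br (c • x) y = c • br x y) ∧
    (∀ x y z : LL, br x (y + z) = br x y + br x z) ∧
    (∀ (c : ℂ) (x y : LL), br x (c • y) = c • br x y) ∧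
    (∀ x y : LL, br x y = - br y x) ∧
    (∀ x y z : LL, br (br x y) z + br (br y z) x + br (br z x) y = 0) := by
  refine ⟨?_, ?_, ?_, ?_, ?_, ?_⟩
  · intro x y z
    simp only [br_eq, map_add, LinearMap.add_apply]; abel
  · intro c x y
    simp only [br_eq, map_smul, LinearMap.smul_apply, smul_sub]
  · intro x y z
    simp only [br_eq, map_add, LinearMap.add_apply]; abel
  · intro c x y
    simp only [br_eq, map_smul, LinearMap.smul_apply, smul_sub]
  · intro x y
    simp only [br_eq, neg_sub]
  · intro x y z
    simp only [br_eq, map_sub, LinearMap.sub_apply, PB_assoc]; abel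
end

section
/- The center of the Lie algebra L_L is one-dimensional: it equals the line ℂ·Z_{0,0} spanned by the element Z_{0,0}. -/
theorem br_Z_apply (x : LL) (l s : ℕ) (r : ℕ × ℕ) :
    br x (Z l s) r = ∑ p ∈ x.support, x p * (zb p (l, s)) r := by
  unfold br Z
  rw [Finsupp.sum, Finsupp.finsetSum_apply]
  refine Finset.sum_congr rfl fun p _ => ?_
  rw [Finsupp.sum_single_index (by simp)]
  simp

theorem zb_left (n m N : ℕ) (h : m < N) :
    zb (n, m) (N, 0) = Z (N - m + n) 0 - Z (n + N) m := by
  have h1 : (0 : ℤ) ≤ (N : ℤ) - m := by omega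
  have h2 : ¬ (0 : ℤ) ≤ (m : ℤ) - N := by omega
  have h3 : ¬ m = N := by omega
  rcases Nat.eq_zero_or_pos n with rfl | hn
  · simp [zb, theta, kdelta, h2, h3, h.le, h.not_ge]
  · have h4 : ¬ n = 0 := by omega
    simp [zb, theta, kdelta, h2, h3, h4, h.le, h.not_ge]

theorem zb_right (n m N : ℕ) (h : n < N) :
    zb (n, m) (0, N) = Z n (m + N) - Z 0 (N - n + m) := by
  have h2 : ¬ (0 : ℤ) ≤ (n : ℤ) - N := by omega
  have h3 : ¬ n = N := by omega
  rcases Nat.eq_zero_or_pos m with rfl | hn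
  · simp [zb, theta, kdelta, h2, h3, h.le, h.not_ge]
  · have h4 : ¬ m = 0 := by omega
    simp [zb, theta, kdelta, h2, h3, h4, h.le, h.not_ge]
    abel

theorem zb_zero (q : ℕ × ℕ) : zb (0, 0) q = 0 := by
  obtain ⟨l, s⟩ := q
  rcases Nat.eq_zero_or_pos l with rfl | hl <;> rcases Nat.eq_zero_or_pos s with rfl | hs
  · simp [zb, theta, kdelta]
  · simp [zb, theta, kdelta, hs.ne, hs.ne']
  · simp [zb, theta, kdelta, hl.ne, hl.ne']
  · simp [zb, theta, kdelta, hl.ne, hl.ne', hs.ne, hs.ne']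

/-- The center of `L_L` is one-dimensional, spanned by `Z_{0,0}`:
an element is central if and only if it is a scalar multiple of `Z_{0,0}`. -/
theorem center_eq_span_Z00 :
    ∀ x : LL, (∀ y : LL, br x y = 0) ↔ ∃ c : ℂ, x = c • Z 0 0 := by
  intro x
  constructor
  · intro hx
    obtain ⟨N, hN⟩ : ∃ N : ℕ, ∀ p ∈ x.support, p.1 < N ∧ p.2 < N := by
      refine ⟨x.support.sup (fun p => p.1 + p.2) + 1, fun p hp => ?_⟩
      have := Finset.le_sup (f := fun p : ℕ × ℕ => p.1 + p.2) hp
      omega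
    have key1 : ∀ n m : ℕ, 0 < m → x (n, m) = 0 := by
      intro n m hm
      have h := br_Z_apply x N 0 (n + N, m)
      rw [hx, Finset.sum_eq_single (n, m)] at h
      · by_cases hs : (n, m) ∈ x.support
        · rw [zb_left n m N (hN _ hs).2] at h
          simpa [Z, Finsupp.single_apply, hm.ne, hm.ne'] using h
        · simpa using hs
      · rintro ⟨a, b⟩ hp hne
        rw [zb_left a b N (hN _ hp).2]
        have : ¬ (a = n ∧ b = m) := by simpa using hne
        simp [Z, Finsupp.single_apply, hm.ne, this]
      · intro hs
        simp [Finsupp.notMem_support_iff.mp hs]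
    have key2 : ∀ n m : ℕ, 0 < n → x (n, m) = 0 := by
      intro n m hm
      have h := br_Z_apply x 0 N (n, m + N)
      rw [hx, Finset.sum_eq_single (n, m)] at h
      · by_cases hs : (n, m) ∈ x.support
        · rw [zb_right n m N (hN _ hs).1] at h
          simpa [Z, Finsupp.single_apply, hm.ne, hm.ne'] using h.symm
        · simpa using hs
      · rintro ⟨a, b⟩ hp hne
        rw [zb_right a b N (hN _ hp).1]
        have : ¬ (a = n ∧ b = m) := by simpa using hne
        simp [Z, Finsupp.single_apply, hm.ne, this]
      · intro hs
        simp [Finsupp.notMem_support_iff.mp hs]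
    refine ⟨x (0, 0), ?_⟩
    ext ⟨n, m⟩
    rcases Nat.eq_zero_or_pos n with rfl | hn
    · rcases Nat.eq_zero_or_pos m with rfl | hm
      · simp [Z]
      · simp [Z, key1 _ _ hm, Finsupp.single_apply, hm.ne]
    · simp [Z, key2 _ _ hn, Finsupp.single_apply, hn.ne]
  · rintro ⟨c, rfl⟩ y
    unfold br
    refine Finset.sum_eq_zero fun p hp => ?_
    have : p = (0, 0) := by
      by_contra hne
      simp [Z, Finsupp.single_apply, Ne.symm hne] at hp
    subst this
    exact Finset.sum_eq_zero fun q _ => by simp [zb_zero]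
end

section
/- For all i, j, r, k ∈ ℤ_{≥0}, the elements E_{i,j} = Z_{i,j} − Z_{i+1,j+1} of L_L satisfy the matrix-unit commutation relations [E_{i,j}, E_{r,k}] = δ_{j,r} E_{i,k} − δ_{k,i} E_{r,j}. -/
/-- The element `E_{i,j} = Z_{i,j} − Z_{i+1,j+1}` of `L_L`. -/
noncomputable def E (i j : ℕ) : LL := Z i j - Z (i + 1) (j + 1)

/-- Half of the bracket: the associative product. -/
noncomputable def PP (n m l s : ℕ) : LL :=
  if m ≤ l then Z (l - m + n) s else Z n (m - l + s)

lemma zb_eq_s6 (n m l s : ℕ) : zb (n, m) (l, s) = PP n m l s - PP l s n m := by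
  unfold zb PP theta kdelta
  rcases lt_trichotomy m l with h | h | h <;> rcases lt_trichotomy n s with h' | h' | h'
  all_goals
    first | subst h | skip
    first | subst h' | skip
    simp [*, le_of_lt, not_le_of_gt, ne_of_lt, ne_of_gt]
    try abel

lemma PP_rel (i j r k : ℕ) :
    PP i j r k - PP i j (r + 1) (k + 1) - PP (i + 1) (j + 1) r k
      + PP (i + 1) (j + 1) (r + 1) (k + 1) = kdelta j r • E i k := by
  unfold PP kdelta E
  rcases lt_trichotomy j r with h | h | h
  · obtain ⟨d, rfl⟩ := Nat.exists_eq_add_of_lt h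
    rw [if_pos (by omega), if_pos (by omega), if_pos (by omega), if_pos (by omega),
      if_neg (by omega),
      show j + d + 1 - (j + 1) + (i + 1) = j + d + 1 - j + i by omega,
      show j + d + 1 + 1 - (j + 1) + (i + 1) = j + d + 1 + 1 - j + i by omega]
    simp
  · subst h
    rw [if_pos (by omega), if_pos (by omega), if_neg (by omega), if_pos (by omega),
      if_pos rfl,
      show j - j + i = i by omega, show j + 1 - j + i = i + 1 by omega,
      show j + 1 - j + k = k + 1 by omega, show j + 1 - (j + 1) + (i + 1) = i + 1 by omega,
      one_smul]
    abel
  · obtain ⟨d, rfl⟩ := Nat.exists_eq_add_of_lt h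
    by_cases hd : d = 0
    · subst hd
      rw [if_neg (by omega), if_pos (by omega), if_neg (by omega), if_neg (by omega),
        if_neg (by omega),
        show r + 1 - (r + 0 + 1) + i = i by omega,
        show r + 0 + 1 - r + k = k + 1 by omega,
        show r + 0 + 1 + 1 - (r + 1) + (k + 1) = r + 0 + 1 + 1 - r + k by omega]
      simp
    · rw [if_neg (by omega), if_neg (by omega), if_neg (by omega), if_neg (by omega),
        if_neg (by omega),
        show r + d + 1 + 1 - (r + 1) + (k + 1) = r + d + 1 + 1 - r + k by omega,
        show r + d + 1 - (r + 1) + (k + 1) = r + d + 1 - r + k by omega]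
      simp

lemma br_sub_left (x y z : LL) : br (x - y) z = br x z - br y z := by
  unfold br
  apply Finsupp.sum_sub_index
  intro p a b
  simp only [sub_mul, sub_smul]
  exact Finsupp.sum_sub

lemma br_sub_right (x y z : LL) : br x (y - z) = br x y - br x z := by
  unfold br
  rw [← Finsupp.sum_sub]
  congr 1
  funext p a
  apply Finsupp.sum_sub_index
  intro q b c
  simp only [mul_sub, sub_smul]

lemma br_Z (n m l s : ℕ) : br (Z n m) (Z l s) = PP n m l s - PP l s n m := by
  rw [← zb_eq_s6]
  unfold br Z
  rw [Finsupp.sum_single_index, Finsupp.sum_single_index] <;> simp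

/-- The elements `E_{i,j}` satisfy the matrix-unit commutation
relations `[E_{i,j}, E_{r,k}] = δ_{j,r} E_{i,k} − δ_{k,i} E_{r,j}`. -/
theorem E_matrix_unit_relations (i j r k : ℕ) :
    br (E i j) (E r k) = kdelta j r • E i k - kdelta k i • E r j := by
  have h1 := PP_rel i j r k
  have h2 := PP_rel r k i j
  rw [← h1, ← h2]
  unfold E
  simp only [br_sub_left, br_sub_right, br_Z]
  abel
end

section
/- The subspace gl_+(∞) ⊆ L_L spanned by the elements E_{i,j} = Z_{i,j} − Z_{i+1,j+1}, i, j ∈ ℤ_{≥0}, is a Lie ideal of L_L: for every x ∈ L_L and every y ∈ gl_+(∞), the bracket [x, y] lies in gl_+(∞). -/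
/-- `gl_+(∞)`, the span of the elements `E_{i,j}`. -/
noncomputable def glInf : Submodule ℂ LL :=
  Submodule.span ℂ {x : LL | ∃ i j : ℕ, x = E i j}

theorem Z_sub_add_mem (a b k : ℕ) : Z a b - Z (a + k) (b + k) ∈ glInf := by
  induction k with
  | zero => simp
  | succ k ih =>
    have h : E (a + k) (b + k) ∈ glInf := Submodule.subset_span ⟨_, _, rfl⟩
    have := glInf.add_mem ih h
    simpa [E, add_assoc] using this

theorem Z_sub_mem (a b c d : ℕ) (h : a + d = c + b) : Z a b - Z c d ∈ glInf := by
  rcases le_total a c with hc | hc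
  · obtain ⟨k, rfl⟩ := Nat.exists_eq_add_of_le hc
    obtain rfl : d = b + k := by omega
    exact Z_sub_add_mem a b k
  · obtain ⟨k, rfl⟩ := Nat.exists_eq_add_of_le hc
    obtain rfl : b = d + k := by omega
    rw [← neg_sub]
    exact glInf.neg_mem (Z_sub_add_mem c d k)

theorem zb_first (n m l s : ℕ) : ∃ a b : ℕ, a + m + s = b + n + l ∧
    theta ((l : ℤ) - m) • Z (l - m + n) s + theta ((m : ℤ) - l) • Z n (m - l + s)
      - kdelta m l • Z n s = Z a b := by
  rcases lt_trichotomy l m with h | h | h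
  · refine ⟨n, m - l + s, by omega, ?_⟩
    have h1 : ¬ (m ≤ l) := by omega
    have h2 : l ≤ m := by omega
    have h3 : ¬ (m = l) := by omega
    simp [theta, kdelta, h1, h2, h3]
  · subst h
    refine ⟨n, s, by omega, ?_⟩
    simp [theta, kdelta]
  · refine ⟨l - m + n, s, by omega, ?_⟩
    have h1 : ¬ (l ≤ m) := by omega
    have h2 : m ≤ l := by omega
    have h3 : ¬ (m = l) := by omega
    simp [theta, kdelta, h1, h2, h3]

theorem zb_mem (p q : ℕ × ℕ) : zb p q ∈ glInf := by
  obtain ⟨n, m⟩ := p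
  obtain ⟨l, s⟩ := q
  obtain ⟨a, b, h, e⟩ := zb_first n m l s
  obtain ⟨c, d, h', e'⟩ := zb_first l s n m
  have hk : kdelta n s = kdelta s n := by simp [kdelta, eq_comm]
  have : zb (n, m) (l, s) = Z a b - Z c d := by
    rw [← e, ← e']
    simp only [zb, hk]
    abel
  rw [this]
  exact Z_sub_mem _ _ _ _ (by omega)

/-- `gl_+(∞)` is a Lie ideal of `L_L`. -/
theorem glInf_is_ideal :
    ∀ x y : LL, y ∈ glInf → br x y ∈ glInf := by
  intro x y _
  exact Submodule.sum_mem _ fun p _ => Submodule.sum_mem _ fun q _ =>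
    Submodule.smul_mem _ _ (zb_mem p q)
end

section
/- For every finite linear combination a = Σ_h a_h E_{h+1,h} (a finitely supported family of complex coefficients a_h, h ∈ ℤ_{≥0}) and every finite linear combination b = Σ_k b_k E_{k,k+1}, the bracket [Z_{1,0} + a, Z_{0,1} + b] in L_L is nonzero. -/
noncomputable def tv (k : ℕ) : ℕ →₀ ℂ := Finsupp.single k 1

noncomputable def zop (p : ℕ × ℕ) : Module.End ℂ (ℕ →₀ ℂ) :=
  Finsupp.linearCombination ℂ (fun k => if p.2 ≤ k then tv (k - p.2 + p.1) else 0)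

noncomputable def rho : LL →ₗ[ℂ] Module.End ℂ (ℕ →₀ ℂ) :=
  Finsupp.linearCombination ℂ zop

lemma zop_tv (p : ℕ × ℕ) (k : ℕ) :
    zop p (tv k) = if p.2 ≤ k then tv (k - p.2 + p.1) else 0 := by
  simp [zop, tv]

lemma rho_Z (n m : ℕ) : rho (Z n m) = zop (n, m) := by
  simp [rho, Z]

lemma zop_mul (n m l s : ℕ) : zop (n, m) * zop (l, s) =
    if m ≤ l then zop (l - m + n, s) else zop (n, m - l + s) := by
  apply Finsupp.lhom_ext'
  intro k
  ext1
  change zop (n, m) (zop (l, s) (tv k)) = (if m ≤ l then zop (l - m + n, s) else zop (n, m - l + s)) (tv k)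
  rw [zop_tv]
  split_ifs with h1 h2 h2
  · rw [zop_tv, zop_tv, if_pos (by simp at *; omega), if_pos h1]
    congr 1; simp at *; omega
  · rw [zop_tv, zop_tv]
    simp only at *
    by_cases h3 : m ≤ k - s + l
    · rw [if_pos h3, if_pos (by omega)]; congr 1; omega
    · rw [if_neg h3, if_neg (by omega)]
  · rw [zop_tv, if_neg h1, map_zero]
  · rw [zop_tv, map_zero, if_neg (by simp at *; omega)]

lemma gen_e {V : Type*} [AddCommGroup V] [Module ℂ V] (m l : ℕ) (u v w : V)
    (h1 : m = l → u = w) (h2 : m = l → v = w) :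
    (if m ≤ l then (1:ℂ) else 0) • u + (if l ≤ m then (1:ℂ) else 0) • v
      - (if m = l then (1:ℂ) else 0) • w = if m ≤ l then u else v := by
  rcases lt_trichotomy m l with h | h | h
  · simp [h.le, h.not_ge, h.ne]
  · rw [h1 h, h2 h]; subst h; simp
  · simp [h.le, h.not_ge, h.ne']

lemma rho_zb (p q : ℕ × ℕ) : rho (zb p q) = zop p * zop q - zop q * zop p := by
  obtain ⟨n, m⟩ := p
  obtain ⟨l, s⟩ := q
  rw [zop_mul, zop_mul]
  simp only [zb, map_add, map_sub, map_smul, rho_Z, theta, kdelta, sub_nonneg, Nat.cast_le]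
  have e1 : (if m ≤ l then (1:ℂ) else 0) • zop (l - m + n, s)
      + (if l ≤ m then (1:ℂ) else 0) • zop (n, m - l + s)
      - (if m = l then (1:ℂ) else 0) • zop (n, s)
      = if m ≤ l then zop (l - m + n, s) else zop (n, m - l + s) := by
    exact gen_e m l (zop (l - m + n, s)) (zop (n, m - l + s)) (zop (n, s))
      (by rintro rfl; simp) (by rintro rfl; simp)
  have e2 : (if s ≤ n then (1:ℂ) else 0) • zop (n - s + l, m)
      + (if n ≤ s then (1:ℂ) else 0) • zop (l, s - n + m)
      - (if n = s then (1:ℂ) else 0) • zop (l, m)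
      = if s ≤ n then zop (n - s + l, m) else zop (l, s - n + m) := by
    simp only [eq_comm (a := n)]
    exact gen_e s n (zop (n - s + l, m)) (zop (l, s - n + m)) (zop (l, m))
      (by rintro rfl; simp) (by rintro rfl; simp)
  rw [← e1, ← e2]
  abel

lemma rho_br (x y : LL) : rho (br x y) = rho x * rho y - rho y * rho x := by
  have hx : rho x = x.sum fun p a => a • zop p := by
    simp [rho, Finsupp.linearCombination_apply]
  have hy : rho y = y.sum fun p a => a • zop p := by
    simp [rho, Finsupp.linearCombination_apply]
  rw [hx, hy]
  simp only [br, Finsupp.sum, map_sum, map_smul, rho_zb]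
  simp only [Finset.sum_mul_sum, smul_mul_smul_comm]
  rw [Finset.sum_comm (s := y.support)]
  refine LinearMap.ext fun v => ?_
  simp only [LinearMap.sub_apply, LinearMap.sum_apply, LinearMap.smul_apply, smul_sub,
    Finset.sum_sub_distrib, mul_comm (y _)]

lemma rho_E (i j k : ℕ) : rho (E i j) (tv k) = if j = k then tv i else 0 := by
  simp only [E, map_sub, rho_Z, LinearMap.sub_apply, zop_tv]
  rcases lt_trichotomy j k with h | h | h
  · rw [if_pos h.le, if_pos (by omega), if_neg h.ne, sub_eq_zero]
    congr 1; omega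
  · subst h; simp
  · rw [if_neg (by omega), if_neg (by omega), if_neg (by omega), sub_zero]

lemma rho_A (a : ℕ →₀ ℂ) (k : ℕ) :
    rho (Z 1 0 + a.sum fun h c => c • E (h + 1) h) (tv k) = (1 + a k) • tv (k + 1) := by
  simp only [Finsupp.sum, map_add, map_sum, map_smul, rho_Z, LinearMap.add_apply,
    LinearMap.sum_apply, LinearMap.smul_apply, rho_E, zop_tv]
  by_cases h : a k = 0 <;> simp [h, add_smul]

lemma rho_B_succ (b : ℕ →₀ ℂ) (k : ℕ) :
    rho (Z 0 1 + b.sum fun h c => c • E h (h + 1)) (tv (k + 1)) = (1 + b k) • tv k := by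
  simp only [Finsupp.sum, map_add, map_sum, map_smul, rho_Z, LinearMap.add_apply,
    LinearMap.sum_apply, LinearMap.smul_apply, rho_E, zop_tv]
  by_cases h : b k = 0 <;> simp [h, add_smul]

lemma rho_B_zero (b : ℕ →₀ ℂ) :
    rho (Z 0 1 + b.sum fun h c => c • E h (h + 1)) (tv 0) = 0 := by
  simp only [Finsupp.sum, map_add, map_sum, map_smul, rho_Z, LinearMap.add_apply,
    LinearMap.sum_apply, LinearMap.smul_apply, rho_E, zop_tv]
  simp

lemma tv_ne (k : ℕ) : tv k ≠ 0 := by simp [tv]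

/-- For any finite linear combinations `a = Σ_h a_h E_{h+1,h}`
and `b = Σ_k b_k E_{k,k+1}`, the bracket `[Z_{1,0} + a, Z_{0,1} + b]` is nonzero. -/
theorem bracket_Z10_Z01_corrected_ne_zero (a b : ℕ →₀ ℂ) :
    br (Z 1 0 + a.sum fun h c => c • E (h + 1) h)
       (Z 0 1 + b.sum fun k c => c • E k (k + 1)) ≠ 0 := by
  intro h0
  have h1 := congrArg rho h0
  rw [rho_br, map_zero] at h1
  have h2 : ∀ k, (1 + a k) * (1 + b k) = 0 := by
    intro k
    induction k with
    | zero =>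
      have h3 := LinearMap.congr_fun h1 (tv 0)
      simp only [LinearMap.sub_apply, Module.End.mul_apply, rho_A, rho_B_zero, map_zero,
        map_smul, rho_B_succ, LinearMap.zero_apply, zero_sub, neg_eq_zero, smul_smul] at h3
      exact (smul_eq_zero.mp h3).resolve_right (tv_ne _)
    | succ k ih =>
      have h3 := LinearMap.congr_fun h1 (tv (k + 1))
      simp only [LinearMap.sub_apply, Module.End.mul_apply, rho_A,
        map_smul, rho_B_succ, LinearMap.zero_apply, smul_smul] at h3
      rw [mul_comm (1 + b k), ih, zero_smul, zero_sub, neg_eq_zero] at h3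
      exact (smul_eq_zero.mp h3).resolve_right (tv_ne _)
  obtain ⟨N, hN⟩ := Infinite.exists_notMem_finset (a.support ∪ b.support)
  have h3 := h2 N
  simp only [Finset.mem_union, Finsupp.mem_support_iff, not_or, not_not] at hN
  simp [hN.1, hN.2] at h3
end

section
/- The quotient Lie algebra C = L_L/gl_+(∞) is abelian and has a countably infinite basis given by the classes Z_n = π(Z_{n,0}) for n > 0, Z_{-n} = π(Z_{0,n}) for n > 0, and Z_0 = π(Z_{0,0}); in particular these classes are linearly independent in C. -/
/-- The classes `Z_n ∈ C = L_L/gl_+(∞)`, `n ∈ ℤ`: `Z_n = π(Z_{n,0})` for `n ≥ 0`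
and `Z_{-n} = π(Z_{0,n})` for `n > 0`. -/
noncomputable def Zbar (i : ℤ) : LL ⧸ glInf :=
  if 0 ≤ i then glInf.mkQ (Z i.toNat 0) else glInf.mkQ (Z 0 (-i).toNat)

theorem mk_Z_aux (k n m : ℕ) : glInf.mkQ (Z (n + k) (m + k)) = glInf.mkQ (Z n m) := by
  induction k with
  | zero => rfl
  | succ k ih =>
    rw [← ih]
    symm
    rw [← sub_eq_zero, ← map_sub, Submodule.mkQ_apply, Submodule.Quotient.mk_eq_zero]
    exact Submodule.subset_span ⟨n + k, m + k, rfl⟩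

theorem mk_Z (n m : ℕ) : glInf.mkQ (Z n m) = Zbar ((n : ℤ) - m) := by
  unfold Zbar
  split_ifs with h
  · have := mk_Z_aux m (n - m) 0
    rw [show n - m + m = n by omega, zero_add] at this
    rw [this]
    congr 2
    omega
  · have := mk_Z_aux n 0 (m - n)
    rw [show m - n + n = m by omega, zero_add] at this
    rw [this]
    congr 2
    omega

theorem mk_zb (p q : ℕ × ℕ) : glInf.mkQ (zb p q) = 0 := by
  obtain ⟨n, m⟩ := p
  obtain ⟨l, s⟩ := q
  have key : ∀ (c : ℂ) (a b : ℕ), (c ≠ 0 → (a : ℤ) - b = (n : ℤ) - m + l - s) →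
      glInf.mkQ (c • Z a b) = c • Zbar ((n : ℤ) - m + l - s) := by
    intro c a b h
    by_cases hc : c = 0
    · simp [hc]
    · rw [map_smul, mk_Z, h hc]
  unfold zb
  simp only [map_add, map_sub]
  rw [key, key, key, key, key, key]
  · simp only [← sub_smul, ← add_smul]
    convert zero_smul ℂ _
    simp only [theta, kdelta]
    rcases lt_trichotomy l m with h | h | h <;> rcases lt_trichotomy s n with h' | h' | h' <;>
      split_ifs <;> first | omega | norm_num
  all_goals
    simp only [theta, kdelta]
    split_ifs
    · intro _; omega
    · simp

noncomputable def degMap : LL →ₗ[ℂ] (ℤ →₀ ℂ) :=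
  Finsupp.lmapDomain ℂ ℂ (fun p : ℕ × ℕ => (p.1 : ℤ) - p.2)

theorem degMap_Z (n m : ℕ) : degMap (Z n m) = Finsupp.single ((n : ℤ) - m) 1 := by
  simp [degMap, Z, Finsupp.mapDomain_single]

theorem glInf_le : glInf ≤ LinearMap.ker degMap := by
  unfold glInf
  rw [Submodule.span_le]
  rintro x ⟨i, j, rfl⟩
  simp [E, degMap_Z]

theorem lift_Zbar (i : ℤ) : glInf.liftQ degMap glInf_le (Zbar i) = Finsupp.single i 1 := by
  have h : Zbar i = glInf.mkQ (Z i.toNat (-i).toNat) := by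
    rw [mk_Z]; congr 1; omega
  rw [h, Submodule.mkQ_apply, Submodule.liftQ_apply, degMap_Z]
  congr 1; omega

/-- The quotient Lie algebra `C = L_L/gl_+(∞)` is abelian, and
the classes `Z_n`, `n ∈ ℤ`, form a (countably infinite) basis of `C`: they are
linearly independent and span `C`. -/
theorem quotient_abelian_and_Zbar_basis :
    (∀ x y : LL, glInf.mkQ (br x y) = 0) ∧
    LinearIndependent ℂ Zbar ∧
    Submodule.span ℂ (Set.range Zbar) = ⊤ := by
  refine ⟨fun x y => ?_, ?_, ?_⟩
  · simp only [br, Finsupp.sum, map_sum, map_smul, mk_zb, smul_zero, Finset.sum_const_zero]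
  · apply LinearIndependent.of_comp (glInf.liftQ degMap glInf_le)
    have : (glInf.liftQ degMap glInf_le) ∘ Zbar = fun i => Finsupp.single i (1 : ℂ) :=
      funext lift_Zbar
    rw [this]
    exact Finsupp.linearIndependent_single_one ℂ ℤ
  · rw [eq_top_iff]
    rintro x -
    obtain ⟨x, rfl⟩ := glInf.mkQ_surjective x
    induction x using Finsupp.induction_linear with
    | zero => simp
    | add f g hf hg => rw [map_add]; exact add_mem hf hg
    | single p c =>
      have : (Finsupp.single p c : LL) = c • Z p.1 p.2 := by simp [Z]
      rw [this, map_smul, mk_Z]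
      exact Submodule.smul_mem _ _ (Submodule.subset_span ⟨_, rfl⟩)
end

section
/- The action of L_L on the vector space S = ⊕_{k≥0} ℂ t_k determined on generators by Z_{n,m}·t_k = t_{k−m+n} if m ≤ k and Z_{n,m}·t_k = 0 if m > k defines a representation of the Lie algebra L_L on S: for all x, y ∈ L_L and v ∈ S, [x,y]·v = x·(y·v) − y·(x·v). -/
/-- The module `S = ⊕_{k ≥ 0} ℂ t_k`, realized as finitely supported functions `ℕ → ℂ`. -/
abbrev SMod : Type := ℕ →₀ ℂ

/-- The basis element `t_k` of `S`. -/
noncomputable def tGen (k : ℕ) : SMod := Finsupp.single k 1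

/-- The bilinear action of `L_L` on `S`, determined on generators by
`Z_{n,m}·t_k = t_{k−m+n}` if `m ≤ k` and `Z_{n,m}·t_k = 0` if `m > k`. -/
noncomputable def act (x : LL) (v : SMod) : SMod :=
  x.sum fun p a => v.sum fun k c =>
    (a * c) • (if p.2 ≤ k then tGen (k - p.2 + p.1) else 0)

/-- The operator of a basis element. -/
noncomputable def opZ (p : ℕ × ℕ) : SMod →ₗ[ℂ] SMod :=
  Finsupp.lsum ℂ fun k => LinearMap.toSpanSingleton ℂ SMod
    (if p.2 ≤ k then tGen (k - p.2 + p.1) else 0)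

/-- The linearised action. -/
noncomputable def opL : LL →ₗ[ℂ] (SMod →ₗ[ℂ] SMod) :=
  Finsupp.lsum ℂ fun p => LinearMap.toSpanSingleton ℂ (SMod →ₗ[ℂ] SMod) (opZ p)

theorem act_eq_opL (x : LL) (v : SMod) : act x v = opL x v := by
  simp only [act, opL, opZ, Finsupp.lsum_apply, LinearMap.toSpanSingleton_apply,
    Finsupp.sum, LinearMap.sum_apply, LinearMap.smul_apply, Finset.smul_sum, smul_smul]

theorem opZ_tGen (p : ℕ × ℕ) (k : ℕ) :
    opZ p (tGen k) = if p.2 ≤ k then tGen (k - p.2 + p.1) else 0 := by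
  simp [opZ, tGen]

theorem opL_Z (n m : ℕ) : opL (Z n m) = opZ (n, m) := by
  simp [opL, Z]

theorem opZ_mul (n m l s : ℕ) : opZ (n, m) ∘ₗ opZ (l, s) =
    theta ((l : ℤ) - m) • opZ (l - m + n, s) + theta ((m : ℤ) - l) • opZ (n, m - l + s)
      - kdelta m l • opZ (n, s) := by
  apply Finsupp.lhom_ext'
  intro k
  apply LinearMap.ext_ring
  change opZ (n, m) (opZ (l, s) (tGen k)) = theta ((l : ℤ) - m) • opZ (l - m + n, s) (tGen k)
    + theta ((m : ℤ) - l) • opZ (n, m - l + s) (tGen k) - kdelta m l • opZ (n, s) (tGen k)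
  simp only [opZ_tGen, theta, kdelta]
  rcases lt_trichotomy m l with h | h | h
  · have h1 : (0 : ℤ) ≤ (l : ℤ) - m := by omega
    have h2 : ¬ (0 : ℤ) ≤ (m : ℤ) - l := by omega
    have h3 : m ≠ l := by omega
    by_cases hs : s ≤ k
    · have h4 : m ≤ k - s + l := by omega
      have h5 : k - s + l - m + n = k - s + (l - m + n) := by omega
      simp only [h1, h2, h3, hs, if_true, if_false, opZ_tGen, h4, h5]
      simp
    · simp only [h1, h2, h3, hs, if_true, if_false]
      simp
  · subst h
    by_cases hs : s ≤ k <;> simp [hs, opZ_tGen]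
  · have h1 : ¬ (0 : ℤ) ≤ (l : ℤ) - m := by omega
    have h2 : (0 : ℤ) ≤ (m : ℤ) - l := by omega
    have h3 : m ≠ l := by omega
    by_cases hs : s ≤ k
    · by_cases h4 : m ≤ k - s + l
      · have h5 : m - l + s ≤ k := by omega
        have h6 : k - s + l - m + n = k - (m - l + s) + n := by omega
        simp only [h1, h2, h3, hs, if_true, if_false, opZ_tGen, h4, h5, h6]
        simp
      · have h5 : ¬ m - l + s ≤ k := by omega
        simp only [h1, h2, h3, hs, if_true, if_false, opZ_tGen, h4, h5]
        simp
    · have h5 : ¬ m - l + s ≤ k := by omega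
      simp only [h1, h2, h3, hs, if_true, if_false, h5]
      simp

theorem opL_zb (p q : ℕ × ℕ) : opL (zb p q) = opZ p ∘ₗ opZ q - opZ q ∘ₗ opZ p := by
  obtain ⟨n, m⟩ := p
  obtain ⟨l, s⟩ := q
  have hk : kdelta s n = kdelta n s := by simp [kdelta, eq_comm]
  rw [opZ_mul, opZ_mul, hk]
  simp only [zb, map_add, map_sub, map_smul, opL_Z]
  abel

theorem opL_br (x y : LL) : opL (br x y) = opL x ∘ₗ opL y - opL y ∘ₗ opL x := by
  have e : ∀ z : LL, opL z = ∑ p ∈ z.support, z p • opZ p := by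
    intro z
    simp [opL, Finsupp.sum]
  have h1 : opL (br x y) = ∑ p ∈ x.support, ∑ q ∈ y.support,
      (x p * y q) • (opZ p ∘ₗ opZ q - opZ q ∘ₗ opZ p) := by
    simp only [br, Finsupp.sum, map_sum, map_smul, opL_zb]
  rw [h1, e x, e y]
  apply LinearMap.ext
  intro v
  simp only [LinearMap.sub_apply, LinearMap.comp_apply, LinearMap.sum_apply,
    LinearMap.smul_apply, map_sum, map_smul, Finset.smul_sum, smul_smul, smul_sub,
    Finset.sum_sub_distrib]
  refine congrArg (fun w => w - _) ?_
  rw [Finset.sum_comm]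
  refine Finset.sum_congr rfl fun q _ => Finset.sum_congr rfl fun p _ => ?_
  rw [mul_comm]

/-- The action of `L_L` on `S` is a Lie algebra representation:
`[x,y]·v = x·(y·v) − y·(x·v)`. -/
theorem act_is_representation :
    ∀ (x y : LL) (v : SMod), act (br x y) v = act x (act y v) - act y (act x v) := by
  intro x y v
  simp only [act_eq_opL, opL_br, LinearMap.sub_apply, LinearMap.comp_apply]
end

section
/- The linear map Y : L_L → L_L determined on basis elements by Y(Z_{n,m}) = (n − m) Z_{n,m} is a derivation of the Lie algebra L_L: Y([x, y]) = [Y(x), y] + [x, Y(y)] for all x, y ∈ L_L. -/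
/-- The grading operator `Y`, determined on basis elements by
`Y(Z_{n,m}) = (n − m) Z_{n,m}`, extended linearly. -/
noncomputable def Ymap (x : LL) : LL :=
  x.sum fun p a => (a * ((p.1 : ℂ) - (p.2 : ℂ))) • Z p.1 p.2

theorem Ymap_add (x y : LL) : Ymap (x + y) = Ymap x + Ymap y := by
  unfold Ymap
  refine Finsupp.sum_add_index' ?_ ?_
  · intro a; simp
  · intro a b c; rw [add_mul, add_smul]

theorem Ymap_smul (c : ℂ) (x : LL) : Ymap (c • x) = c • Ymap x := by
  unfold Ymap
  rw [Finsupp.sum_smul_index (by intro a; simp), Finsupp.smul_sum]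
  simp only [smul_smul, mul_assoc]

theorem Ymap_zero : Ymap 0 = 0 := by simp [Ymap]

theorem Ymap_sub (x y : LL) : Ymap (x - y) = Ymap x - Ymap y := by
  have h : x - y = x + (-1 : ℂ) • y := by simp [sub_eq_add_neg]
  rw [h, Ymap_add, Ymap_smul]
  simp [sub_eq_add_neg]

theorem Ymap_single (p : ℕ × ℕ) (a : ℂ) :
    Ymap (Finsupp.single p a) = Finsupp.single p (a * ((p.1 : ℂ) - (p.2 : ℂ))) := by
  unfold Ymap
  rw [Finsupp.sum_single_index (by simp)]
  simp [Z]

theorem Ymap_Z (n m : ℕ) : Ymap (Z n m) = ((n : ℂ) - (m : ℂ)) • Z n m := by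
  unfold Z
  rw [Ymap_single]
  simp

theorem theta_term (k : ℤ) (n m : ℕ) (d : ℂ) (h : 0 ≤ k → (n : ℂ) - m = d) :
    Ymap (theta k • Z n m) = d • (theta k • Z n m) := by
  rw [Ymap_smul, Ymap_Z]
  unfold theta
  split_ifs with hk
  · rw [h hk]; simp
  · simp

theorem kdelta_term (a b : ℕ) (n m : ℕ) (d : ℂ) (h : a = b → (n : ℂ) - m = d) :
    Ymap (kdelta a b • Z n m) = d • (kdelta a b • Z n m) := by
  rw [Ymap_smul, Ymap_Z]
  unfold kdelta
  split_ifs with hk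
  · rw [h hk]; simp
  · simp

theorem Ymap_zb (p q : ℕ × ℕ) :
    Ymap (zb p q) = (((p.1 : ℂ) - p.2) + ((q.1 : ℂ) - q.2)) • zb p q := by
  obtain ⟨n, m⟩ := p
  obtain ⟨l, s⟩ := q
  simp only [zb]
  rw [Ymap_add, Ymap_sub, Ymap_add, Ymap_sub, Ymap_sub]
  rw [theta_term _ _ _ (((n : ℂ) - m) + ((l : ℂ) - s)),
    theta_term _ _ _ (((n : ℂ) - m) + ((l : ℂ) - s)),
    theta_term _ _ _ (((n : ℂ) - m) + ((l : ℂ) - s)),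
    theta_term _ _ _ (((n : ℂ) - m) + ((l : ℂ) - s)),
    kdelta_term _ _ _ _ (((n : ℂ) - m) + ((l : ℂ) - s)),
    kdelta_term _ _ _ _ (((n : ℂ) - m) + ((l : ℂ) - s))]
  · simp only [smul_add, smul_sub]
  · rintro rfl; ring
  · rintro rfl; ring
  all_goals
    intro h
    rw [Nat.cast_add, Nat.cast_sub (by omega)]
    ring

theorem br_add_left (x x' y : LL) : br (x + x') y = br x y + br x' y := by
  unfold br
  refine Finsupp.sum_add_index' ?_ ?_
  · intro a; simp
  · intro a b c; simp only [add_mul, add_smul, Finsupp.sum_add]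

theorem br_add_right (x y y' : LL) : br x (y + y') = br x y + br x y' := by
  unfold br
  rw [← Finsupp.sum_add]
  refine Finsupp.sum_congr fun p _ => ?_
  refine Finsupp.sum_add_index' ?_ ?_
  · intro a; simp
  · intro a b c; simp only [mul_add, add_smul]

theorem br_single (p q : ℕ × ℕ) (a b : ℂ) :
    br (Finsupp.single p a) (Finsupp.single q b) = (a * b) • zb p q := by
  unfold br
  rw [Finsupp.sum_single_index (by simp), Finsupp.sum_single_index (by simp)]

theorem br_zero_left (y : LL) : br 0 y = 0 := by simp [br]

theorem br_zero_right (x : LL) : br x 0 = 0 := by simp [br]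

/-- `Y` is a derivation of the Lie algebra `L_L`:
`Y([x, y]) = [Y(x), y] + [x, Y(y)]`. -/
theorem Ymap_is_derivation :
    ∀ x y : LL, Ymap (br x y) = br (Ymap x) y + br x (Ymap y) := by
  intro x y
  induction x using Finsupp.induction_linear with
  | zero => simp only [br_zero_left, Ymap_zero, add_zero]
  | add f g hf hg =>
    rw [br_add_left, Ymap_add, hf, hg, Ymap_add, br_add_left, br_add_left]
    abel
  | single p a =>
    induction y using Finsupp.induction_linear with
    | zero => simp only [br_zero_right, Ymap_zero, add_zero]
    | add f g hf hg =>
      rw [br_add_right, Ymap_add, hf, hg, Ymap_add, br_add_right, br_add_right]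
      abel
    | single q b =>
      rw [br_single, Ymap_smul, Ymap_zb, Ymap_single, Ymap_single, br_single, br_single,
        smul_smul, ← add_smul]
      congr 1
      ring
end

section
/- Let φ : L_L → ℂ be a linear functional that vanishes on all brackets (φ([x,y]) = 0 for all x, y ∈ L_L) and that is invariant under the grading derivation, i.e. φ((n−m) Z_{n,m}) = 0 for all n, m. Then φ(Z_{n,m}) = φ(Z_{0,0}) · δ_{n,m} for all n, m ∈ ℤ_{≥0}; in particular the space of such functionals is one-dimensional. -/
/-- If a linear functional `φ : L_L → ℂ` vanishes on all
brackets and is invariant under the grading derivation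
(`φ((n−m) Z_{n,m}) = 0` for all `n, m`), then `φ(Z_{n,m}) = δ_{n,m} φ(Z_{0,0})`;
in particular the space of such functionals is one-dimensional. -/
theorem invariant_functional_eq_delta_mul (φ : LL →ₗ[ℂ] ℂ)
    (hbr : ∀ x y : LL, φ (br x y) = 0)
    (hY : ∀ n m : ℕ, φ ((((n : ℂ) - (m : ℂ))) • Z n m) = 0) :
    ∀ n m : ℕ, φ (Z n m) = kdelta n m * φ (Z 0 0) := by
  intro n m
  by_cases h : n = m
  · subst h
    have h1 := hbr (Z n 0) (Z 0 n)
    have h2 : br (Z n 0) (Z 0 n) = Z n n - Z 0 0 := by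
      have : br (Z n 0) (Z 0 n) = zb (n, 0) (0, n) := by
        unfold br Z
        rw [Finsupp.sum_single_index, Finsupp.sum_single_index] <;> simp
      rw [this]
      simp [zb, theta, kdelta]
    rw [h2, map_sub, sub_eq_zero] at h1
    simp [kdelta, h1]
  · have h1 := hY n m
    rw [map_smul, smul_eq_mul, mul_eq_zero] at h1
    rcases h1 with h1 | h1
    · exact absurd (by exact_mod_cast sub_eq_zero.mp h1) h
    · simp [kdelta, h, h1]
end

section
/- For every x ∈ L_L and every y ∈ gl_+(∞), the bracket [x, y] lies in sl_+(∞), the subspace of gl_+(∞) consisting of elements of trace zero; i.e. [L_L, gl_+(∞)] ⊆ sl_+(∞). -/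
/-- The trace functional on `L_L`: the linear functional sending the basis
element `Z_{n,m}` to `-n` if `n = m` and to `0` otherwise.  Under the
identification of `gl_+(∞)` with finitely supported matrices it restricts to the
matrix trace: `Tr (E i j) = δ_{i,j}`, so `Tr (Σ c_{ij} E_{ij}) = Σ_i c_{ii}`. -/
noncomputable def Tr : LL →ₗ[ℂ] ℂ :=
  Finsupp.linearCombination ℂ (fun p : ℕ × ℕ => if p.1 = p.2 then -(p.1 : ℂ) else 0)

/-- `sl_+(∞)`, the subspace of `gl_+(∞)` of trace-zero elements. -/
noncomputable def slInf : Submodule ℂ LL := glInf ⊓ LinearMap.ker Tr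

lemma zb_E_aux (n m i j : ℕ) : zb (n, m) (i, j) - zb (n, m) (i + 1, j + 1) =
    (if m ≤ i then E (i - m + n) j else 0) - (if n ≤ j then E i (j - n + m) else 0) := by
  have h1 : theta ((i : ℤ) - m) • Z (i - m + n) j + theta ((m : ℤ) - i) • Z n (m - i + j)
      - kdelta m i • Z n j
      - (theta (((i + 1 : ℕ) : ℤ) - m) • Z (i + 1 - m + n) (j + 1)
        + theta ((m : ℤ) - (i + 1 : ℕ)) • Z n (m - (i + 1) + (j + 1))
        - kdelta m (i + 1) • Z n (j + 1)) = if m ≤ i then E (i - m + n) j else 0 := by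
    unfold theta kdelta E
    rcases lt_trichotomy m i with h | h | h
    · obtain ⟨k, rfl⟩ := Nat.exists_eq_add_of_lt h
      rw [if_pos (by omega), if_neg (by omega), if_neg (by omega), if_pos (by omega),
        if_neg (by omega), if_neg (by omega), if_pos (by omega),
        show m + k + 1 + 1 - m + n = m + k + 1 - m + n + 1 by omega]
      simp
    · rw [if_pos (by omega), if_pos (by omega), if_pos (by omega), if_pos (by omega),
        if_neg (by omega), if_neg (by omega), if_pos (by omega),
        show i + 1 - m + n = i - m + n + 1 by omega]
      subst h
      simp
    · rcases Nat.eq_or_lt_of_le (Nat.succ_le_of_lt h) with h' | h'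
      · rw [if_neg (by omega), if_pos (by omega), if_neg (by omega), if_pos (by omega),
          if_pos (by omega), if_pos (by omega), if_neg (by omega),
          show m - i + j = j + 1 by omega]
        subst h'
        simp
      · rw [if_neg (by omega), if_pos (by omega), if_neg (by omega), if_neg (by omega),
          if_pos (by omega), if_neg (by omega), if_neg (by omega),
          show m - (i + 1) + (j + 1) = m - i + j by omega]
        simp
  have h2 : theta ((j : ℤ) - n) • Z i (j - n + m) + theta ((n : ℤ) - j) • Z (n - j + i) m
      - kdelta n j • Z i m
      - (theta (((j + 1 : ℕ) : ℤ) - n) • Z (i + 1) (j + 1 - n + m)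
        + theta ((n : ℤ) - (j + 1 : ℕ)) • Z (n - (j + 1) + (i + 1)) m
        - kdelta n (j + 1) • Z (i + 1) m) = if n ≤ j then E i (j - n + m) else 0 := by
    unfold theta kdelta E
    rcases lt_trichotomy n j with h | h | h
    · obtain ⟨k, rfl⟩ := Nat.exists_eq_add_of_lt h
      rw [if_pos (by omega), if_neg (by omega), if_neg (by omega), if_pos (by omega),
        if_neg (by omega), if_neg (by omega), if_pos (by omega),
        show n + k + 1 + 1 - n + m = n + k + 1 - n + m + 1 by omega]
      simp
    · rw [if_pos (by omega), if_pos (by omega), if_pos (by omega), if_pos (by omega),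
        if_neg (by omega), if_neg (by omega), if_pos (by omega),
        show j + 1 - n + m = j - n + m + 1 by omega]
      subst h
      simp
    · rcases Nat.eq_or_lt_of_le (Nat.succ_le_of_lt h) with h' | h'
      · rw [if_neg (by omega), if_pos (by omega), if_neg (by omega), if_pos (by omega),
          if_pos (by omega), if_pos (by omega), if_neg (by omega),
          show n - j + i = i + 1 by omega]
        subst h'
        simp
      · rw [if_neg (by omega), if_pos (by omega), if_neg (by omega), if_neg (by omega),
          if_pos (by omega), if_neg (by omega), if_neg (by omega),
          show n - (j + 1) + (i + 1) = n - j + i by omega]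
        simp
  rw [← h1, ← h2]
  simp only [zb]
  abel

lemma E_mem_glInf (i j : ℕ) : E i j ∈ glInf := Submodule.subset_span ⟨i, j, rfl⟩

lemma Tr_E (i j : ℕ) : Tr (E i j) = if i = j then 1 else 0 := by
  simp only [Tr, E, Z, map_sub, Finsupp.linearCombination_single]
  by_cases h : i = j <;> simp [h]

lemma zb_E_mem (n m i j : ℕ) :
    zb (n, m) (i, j) - zb (n, m) (i + 1, j + 1) ∈ slInf := by
  rw [zb_E_aux]
  refine ⟨Submodule.sub_mem _ ?_ ?_, ?_⟩
  · split_ifs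
    exacts [E_mem_glInf _ _, zero_mem _]
  · split_ifs
    exacts [E_mem_glInf _ _, zero_mem _]
  · change Tr _ = 0
    rw [map_sub, apply_ite Tr, apply_ite Tr, Tr_E, Tr_E, map_zero]
    split_ifs <;> first | omega | simp

lemma br_eq_s17 (x y : LL) :
    br x y = x.sum fun p a => a • Finsupp.linearCombination ℂ (zb p) y := by
  simp only [br, Finsupp.linearCombination_apply, Finsupp.smul_sum, mul_smul]

/-- `[L_L, gl_+(∞)] ⊆ sl_+(∞)`. -/
theorem bracket_LL_glInf_subset_slInf :
    ∀ x y : LL, y ∈ glInf → br x y ∈ slInf := by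
  intro x y hy
  rw [br_eq_s17]
  refine Submodule.sum_mem _ fun p _ => Submodule.smul_mem _ _ ?_
  have : glInf ≤ slInf.comap (Finsupp.linearCombination ℂ (zb p)) := by
    refine Submodule.span_le.2 ?_
    rintro _ ⟨i, j, rfl⟩
    have := zb_E_mem p.1 p.2 i j
    simpa [E, Z] using this
  exact this hy
end
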